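/- arXiv:2512.11361 — 4 statements merged into one kernel-verified Lean document; each statement's English description precedes it below -/
import Mathlib

section
/- Let L be an algebraic signature and E an equational theory over L with no drop equations. Then for every type X (with decidable equality) and all terms t, s : L.Term X, if t ∼_X s (where ∼_X is the congruence generated by E), then Term.varFinset t = Term.varFinset s; i.e., congruent terms have exactly the same free variables. -/
open FirstOrder

universe u v

/-- The congruence on `L.Term X` generated by an equational theory
`E ⊆ L.Term ℕ × L.Term ℕ`: the smallest equivalence relation containing all substitution
instances of the equations of `E` and closed under the operations of the signature. -/
inductive EqCongr (L : FirstOrder.Language.{u, v}) (E : Set (L.Term ℕ × L.Term ℕ))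
    {X : Type u} : L.Term X → L.Term X → Prop
  | ax {t s : L.Term ℕ} (h : (t, s) ∈ E) (σ : ℕ → L.Term X) :
      EqCongr L E (t.subst σ) (s.subst σ)
  | refl (t : L.Term X) : EqCongr L E t t
  | symm {t s : L.Term X} : EqCongr L E t s → EqCongr L E s t
  | trans {t s r : L.Term X} : EqCongr L E t s → EqCongr L E s r → EqCongr L E t r
  | func {n : ℕ} (f : L.Functions n) {t s : Fin n → L.Term X}
      (h : ∀ i, EqCongr L E (t i) (s i)) :
      EqCongr L E (FirstOrder.Language.Term.func f t) (FirstOrder.Language.Term.func f s)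

theorem varFinset_subst_eq {L : FirstOrder.Language.{u, v}} {X : Type u} [DecidableEq X]
    (t : L.Term ℕ) (σ : ℕ → L.Term X) :
    (t.subst σ).varFinset = t.varFinset.biUnion fun n => (σ n).varFinset := by
  induction t with
  | var a => simp [FirstOrder.Language.Term.subst, FirstOrder.Language.Term.varFinset]
  | func f ts ih =>
    simp only [FirstOrder.Language.Term.subst, FirstOrder.Language.Term.varFinset, ih,
      Finset.biUnion_biUnion]

theorem congr_of_no_drop_preserves_varFinset
    (L : FirstOrder.Language.{u, v}) (halg : ∀ n, IsEmpty (L.Relations n))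
    (E : Set (L.Term ℕ × L.Term ℕ))
    (hnd : ∀ p ∈ E, p.1.varFinset = p.2.varFinset)
    {X : Type u} [DecidableEq X] (t s : L.Term X)
    (h : EqCongr L E t s) :
    t.varFinset = s.varFinset := by
  induction h with
  | ax h σ => rw [varFinset_subst_eq, varFinset_subst_eq, hnd _ h]
  | refl t => rfl
  | symm _ ih => exact ih.symm
  | trans _ _ ih1 ih2 => exact ih1.trans ih2
  | func f _ ih => simp only [FirstOrder.Language.Term.varFinset, ih]
end

section
/- Let L be an algebraic signature and E an equational theory over L with no drop equations. Let j : A → B be an injective function. Then for all terms t, s : L.Term A, if t.relabel j ∼_B s.relabel j then t ∼_A s (where ∼_X denotes the congruence generated by E on L.Term X). Consequently the induced map of quotients (L.Term A)/∼_A → (L.Term B)/∼_B is injective. -/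
open FirstOrder

universe u v

lemma relabel_subst {L : FirstOrder.Language.{u, v}} {α : Type*} {X Y : Type u}
    (t : L.Term α) (σ : α → L.Term X) (f : X → Y) :
    (t.subst σ).relabel f = t.subst (fun a => (σ a).relabel f) := by
  induction t with
  | var a => rfl
  | func g ts ih => simp [Language.Term.subst, Language.Term.relabel, ih]

lemma EqCongr.relabel {L : FirstOrder.Language.{u, v}} {E : Set (L.Term ℕ × L.Term ℕ)}
    {X Y : Type u} (f : X → Y) {t s : L.Term X} (h : EqCongr L E t s) :
    EqCongr L E (t.relabel f) (s.relabel f) := by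
  induction h with
  | ax h σ => rw [relabel_subst, relabel_subst]; exact EqCongr.ax h _
  | refl t => exact EqCongr.refl _
  | symm _ ih => exact ih.symm
  | trans _ _ ih1 ih2 => exact ih1.trans ih2
  | func g _ ih => exact EqCongr.func g ih

/-- The setoid given by the congruence generated by `E`. -/
def congrSetoid (L : FirstOrder.Language.{u, v}) (E : Set (L.Term ℕ × L.Term ℕ))
    (X : Type u) : Setoid (L.Term X) :=
  ⟨EqCongr L E, ⟨EqCongr.refl, EqCongr.symm, EqCongr.trans⟩⟩

/-- The free model of the algebraic theory `(L, E)` on a type `X`: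
terms modulo the congruence generated by `E`. -/
def T (L : FirstOrder.Language.{u, v}) (E : Set (L.Term ℕ × L.Term ℕ)) (X : Type u) : Type u :=
  Quotient (congrSetoid L E X)

/-- The action of the free model construction on functions, induced by `Term.relabel`. -/
def Tmap (L : FirstOrder.Language.{u, v}) (E : Set (L.Term ℕ × L.Term ℕ)) {X Y : Type u}
    (f : X → Y) : T L E X → T L E Y :=
  Quotient.map (FirstOrder.Language.Term.relabel f) (fun _ _ h => h.relabel f)

lemma subst_subst_aux {L : FirstOrder.Language.{u, v}} {α : Type*} {X Y : Type u}
    (t : L.Term α) (σ : α → L.Term X) (τ : X → L.Term Y) :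
    (t.subst σ).subst τ = t.subst (fun a => (σ a).subst τ) := by
  induction t with
  | var a => rfl
  | func g ts ih => simp [Language.Term.subst, ih]

lemma EqCongr.subst_aux {L : FirstOrder.Language.{u, v}} {E : Set (L.Term ℕ × L.Term ℕ)}
    {X Y : Type u} (τ : X → L.Term Y) {t s : L.Term X} (h : EqCongr L E t s) :
    EqCongr L E (t.subst τ) (s.subst τ) := by
  induction h with
  | ax h σ => rw [subst_subst_aux, subst_subst_aux]; exact EqCongr.ax h _
  | refl t => exact EqCongr.refl _
  | symm _ ih => exact ih.symm
  | trans _ _ ih1 ih2 => exact ih1.trans ih2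
  | func g _ ih => exact EqCongr.func g ih

lemma relabel_subst_cancel {L : FirstOrder.Language.{u, v}} {A B : Type u} (j : A → B)
    (τ : B → L.Term A) (hτ : ∀ a, τ (j a) = Language.Term.var a) (t : L.Term A) :
    (t.relabel j).subst τ = t := by
  induction t with
  | var a => exact hτ a
  | func g ts ih => simp [Language.Term.subst, Language.Term.relabel, ih]

theorem congr_reflects_along_injective_relabel
    (L : FirstOrder.Language.{u, v}) (halg : ∀ n, IsEmpty (L.Relations n))
    (E : Set (L.Term ℕ × L.Term ℕ))
    (hnd : ∀ p ∈ E, p.1.varFinset = p.2.varFinset)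
    {A B : Type u} (j : A → B) (hj : Function.Injective j) :
    (∀ t s : L.Term A, EqCongr L E (t.relabel j) (s.relabel j) → EqCongr L E t s) ∧
      Function.Injective (Tmap L E j) := by
  have key : ∀ t s : L.Term A, EqCongr L E (t.relabel j) (s.relabel j) → EqCongr L E t s := by
    intro t s h
    -- send `j a` to `a`, and every variable outside the range of `j` to `t`
    have hτ : ∀ a, Function.extend j Language.Term.var (fun _ => t) (j a) = Language.Term.var a :=
      fun a => hj.extend_apply _ _ a
    have h2 := h.subst_aux (Function.extend j Language.Term.var (fun _ => t))
    rwa [relabel_subst_cancel j _ hτ, relabel_subst_cancel j _ hτ] at h2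
  refine ⟨key, ?_⟩
  intro x y
  refine Quotient.inductionOn₂ x y ?_
  intro t s h
  exact Quotient.sound (key t s (Quotient.exact h))
end

section
/- Let L be an algebraic signature and E an equational theory over L with no drop equations, and write T(X) = (L.Term X)/∼_X for the quotient by the congruence generated by E, with maps T(f) induced by Term.relabel f. Let f : X → Y be any function, Z ⊆ Y a subset with inclusion i : Z → Y, and let f' : f⁻¹(Z) → Z be the restriction of f and i' : f⁻¹(Z) → X the inclusion. Then the square with vertices T(f⁻¹(Z)), T(Z), T(X), T(Y) and maps T(f'), T(i'), T(i), T(f) is a pullback in Type: the canonical map T(f⁻¹(Z)) → T(X) ×_{T(Y)} T(Z) is a bijection. In other words, T preserves pullbacks along monomorphisms. -/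
open FirstOrder

universe u v

lemma Tmap_comp (L : FirstOrder.Language.{u, v}) (E : Set (L.Term ℕ × L.Term ℕ))
    {X Y Z : Type u} (f : X → Y) (g : Y → Z) (q : T L E X) :
    Tmap L E g (Tmap L E f q) = Tmap L E (g ∘ f) q :=
  Quotient.inductionOn q fun t =>
    congrArg (Quotient.mk (congrSetoid L E Z)) (FirstOrder.Language.Term.relabel_relabel f g t)

namespace FreeModelAux

open FirstOrder.Language

/-- The set of variables occurring in a term. -/
def vs {L : FirstOrder.Language.{u, v}} {α : Type*} : L.Term α → Set α
  | .var a => {a}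
  | .func _ ts => ⋃ i, vs (ts i)

lemma vs_eq {L : FirstOrder.Language.{u, v}} (t : L.Term ℕ) : vs t = ↑t.varFinset := by
  induction t with
  | var a => simp [vs, Term.varFinset]
  | func g ts ih => simp [vs, Term.varFinset, ih]

lemma vs_subst {L : FirstOrder.Language.{u, v}} {α β : Type*} (t : L.Term α)
    (σ : α → L.Term β) : vs (t.subst σ) = ⋃ a ∈ vs t, vs (σ a) := by
  induction t with
  | var a => simp [vs, Term.subst]
  | func g ts ih =>
    ext x
    simp only [vs, Term.subst, ih, Set.mem_iUnion]
    constructor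
    · rintro ⟨i, a, ha, hx⟩
      exact ⟨a, ⟨i, ha⟩, hx⟩
    · rintro ⟨a, ⟨i, ha⟩, hx⟩
      exact ⟨i, a, ha, hx⟩

lemma vs_relabel {L : FirstOrder.Language.{u, v}} {α β : Type*} (t : L.Term α)
    (f : α → β) : vs (t.relabel f) = f '' vs t := by
  induction t with
  | var a => simp [vs, Term.relabel]
  | func g ts ih => simp [vs, Term.relabel, ih, Set.image_iUnion]

lemma vs_congr {L : FirstOrder.Language.{u, v}} {E : Set (L.Term ℕ × L.Term ℕ)}
    (hnd : ∀ p ∈ E, p.1.varFinset = p.2.varFinset) {X : Type u} {t s : L.Term X}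
    (h : EqCongr L E t s) : vs t = vs s := by
  induction h with
  | ax h σ =>
    have := hnd _ h
    simp only at this
    rw [vs_subst, vs_subst, vs_eq, vs_eq, this]
  | refl t => rfl
  | symm _ ih => exact ih.symm
  | trans _ _ ih1 ih2 => exact ih1.trans ih2
  | func g _ ih => simp [vs, ih]

lemma subst_subst' {L : FirstOrder.Language.{u, v}} {α β γ : Type*}
    (t : L.Term α) (σ : α → L.Term β) (τ : β → L.Term γ) :
    (t.subst σ).subst τ = t.subst (fun a => (σ a).subst τ) := by
  induction t with
  | var a => rfl
  | func g ts ih => simp [Term.subst, ih]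

lemma congr_subst {L : FirstOrder.Language.{u, v}} {E : Set (L.Term ℕ × L.Term ℕ)}
    {X Y : Type u} (τ : X → L.Term Y) {t s : L.Term X} (h : EqCongr L E t s) :
    EqCongr L E (t.subst τ) (s.subst τ) := by
  induction h with
  | ax h σ => rw [subst_subst', subst_subst']; exact EqCongr.ax h _
  | refl t => exact EqCongr.refl _
  | symm _ ih => exact ih.symm
  | trans _ _ ih1 ih2 => exact ih1.trans ih2
  | func g _ ih => exact EqCongr.func g ih

lemma relabel_retract {L : FirstOrder.Language.{u, v}} {α β : Type*} (i : α → β)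
    (r : β → L.Term α) (hr : ∀ a, r (i a) = .var a) (t : L.Term α) :
    (t.relabel i).subst r = t := by
  induction t with
  | var a => exact hr a
  | func g ts ih => simp [Term.subst, Term.relabel, ih]

lemma congr_of_relabel {L : FirstOrder.Language.{u, v}} {E : Set (L.Term ℕ × L.Term ℕ)}
    {X : Type u} (S : Set X) {t s : L.Term S}
    (h : EqCongr L E (t.relabel Subtype.val) (s.relabel Subtype.val)) : EqCongr L E t s := by
  classical
  let r : X → L.Term S := fun x => if hx : x ∈ S then .var ⟨x, hx⟩ else t
  have hr : ∀ a : S, r a.1 = .var a := fun a => by simp [r]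
  have := congr_subst r h
  rwa [relabel_retract _ r hr, relabel_retract _ r hr] at this

lemma Tmap_val_injective (L : FirstOrder.Language.{u, v}) (E : Set (L.Term ℕ × L.Term ℕ))
    {X : Type u} (S : Set X) : Function.Injective (Tmap L E (Subtype.val : S → X)) := by
  intro p q
  induction p using Quotient.inductionOn with | _ t
  induction q using Quotient.inductionOn with | _ s
  intro h
  exact Quotient.sound (s := congrSetoid L E S)
    (congr_of_relabel S (Quotient.exact (s := congrSetoid L E X) h))

lemma exists_lift {L : FirstOrder.Language.{u, v}} {X : Type u} (S : Set X) (t : L.Term X)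
    (h : vs t ⊆ S) : ∃ t' : L.Term S, t'.relabel Subtype.val = t := by
  induction t with
  | var a => exact ⟨.var ⟨a, h (by simp [vs])⟩, rfl⟩
  | func g ts ih =>
    choose ts' h' using fun i => ih i ((Set.subset_iUnion (fun i => vs (ts i)) i).trans h)
    exact ⟨.func g ts', by simp [Term.relabel, h']⟩

end FreeModelAux

theorem freeModel_preserves_pullbacks_along_monos
    (L : FirstOrder.Language.{u, v}) (halg : ∀ n, IsEmpty (L.Relations n))
    (E : Set (L.Term ℕ × L.Term ℕ))
    (hnd : ∀ p ∈ E, p.1.varFinset = p.2.varFinset)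
    {X Y : Type u} (f : X → Y) (Z : Set Y) :
    Function.Bijective
      (fun q : T L E (f ⁻¹' Z : Set X) =>
        (⟨(Tmap L E (Subtype.val : (f ⁻¹' Z : Set X) → X) q,
           Tmap L E (fun a : (f ⁻¹' Z : Set X) => (⟨f a.1, a.2⟩ : Z)) q),
          by
            rw [Tmap_comp, Tmap_comp]; rfl⟩ :
          {p : T L E X × T L E Z //
            Tmap L E f p.1 = Tmap L E (Subtype.val : Z → Y) p.2})) := by
  constructor
  · intro p q h
    exact FreeModelAux.Tmap_val_injective L E _ (congrArg (fun x => x.1.1) h)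
  · rintro ⟨⟨p, q⟩, h⟩
    obtain ⟨t, rfl⟩ := Quotient.exists_rep p
    obtain ⟨z, rfl⟩ := Quotient.exists_rep q
    have hc : EqCongr L E (t.relabel f) (z.relabel Subtype.val) :=
      Quotient.exact (s := congrSetoid L E Y) h
    have hv := FreeModelAux.vs_congr hnd hc
    rw [FreeModelAux.vs_relabel, FreeModelAux.vs_relabel] at hv
    have hs : FreeModelAux.vs t ⊆ f ⁻¹' Z := by
      intro x hx
      have : f x ∈ Subtype.val '' FreeModelAux.vs z := hv ▸ Set.mem_image_of_mem f hx
      obtain ⟨y, -, hy⟩ := this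
      have hz : f x ∈ Z := hy ▸ y.2
      exact hz
    obtain ⟨t', ht'⟩ := FreeModelAux.exists_lift _ t hs
    have h1 : Tmap L E (Subtype.val : (f ⁻¹' Z : Set X) → X)
        (Quotient.mk (congrSetoid L E _) t') = Quotient.mk (congrSetoid L E X) t :=
      congrArg (Quotient.mk (congrSetoid L E X)) ht'
    refine ⟨Quotient.mk (congrSetoid L E _) t', Subtype.ext (Prod.ext h1 ?_)⟩
    apply FreeModelAux.Tmap_val_injective L E Z
    refine Eq.trans ?_ h
    refine Eq.trans ?_ (congrArg (Tmap L E f) h1)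
    exact (Tmap_comp L E (fun a : (f ⁻¹' Z : Set X) => (⟨f a.1, a.2⟩ : Z)) Subtype.val
      (Quotient.mk (congrSetoid L E _) t')).trans
      (Tmap_comp L E (Subtype.val : (f ⁻¹' Z : Set X) → X) f
        (Quotient.mk (congrSetoid L E _) t')).symm
end

section
/- Let I be a linear order, X a type, and P : X → I → Prop such that for each x the predicate P x is antitone (if β ≤ α and P x α then P x β). Suppose there exists n : I such that for all α ≥ n and all x, y : X, if P x α and P y α then x = y (the witness is essentially unique from stage n on). Then (∀ α : I, ∃ x : X, P x α) → (∃ x : X, ∀ α : I, P x α), and hence the two statements are equivalent. -/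
theorem forall_exists_comm_of_essentially_unique
    {I : Type*} [LinearOrder I] (X : Type*) (P : X → I → Prop)
    (hanti : ∀ x : X, Antitone (P x))
    (huniq : ∃ n : I, ∀ α : I, n ≤ α → ∀ x y : X, P x α → P y α → x = y) :
    ((∀ α : I, ∃ x : X, P x α) → ∃ x : X, ∀ α : I, P x α) ∧
      ((∀ α : I, ∃ x : X, P x α) ↔ ∃ x : X, ∀ α : I, P x α) := by
  have key : (∀ α : I, ∃ x : X, P x α) → ∃ x : X, ∀ α : I, P x α := by
    intro h
    obtain ⟨n, hn⟩ := huniq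
    obtain ⟨x, hx⟩ := h n
    refine ⟨x, fun α => ?_⟩
    obtain ⟨y, hy⟩ := h (max α n)
    have hyn : P y n := hanti y (le_max_right α n) hy
    have hxy : x = y := hn n le_rfl x y hx hyn
    rw [hxy]
    exact hanti y (le_max_left α n) hy
  exact ⟨key, key, fun ⟨x, hx⟩ α => ⟨x, hx α⟩⟩
end
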